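/- arXiv:1101.2609 — 2 statements merged into one kernel-verified Lean document; each statement's English description precedes it below -/
import Mathlib

section
/- For every integer n ≥ 1, one has ∑_{j=0}^{n} C(n,j) · (-1)^j · E_{j,q^{-1}} = 2 + q^{-1} · E_{n,q}. (This is the k = 0 case of Corollary 5 of the paper, obtained by comparing two p-adic integral evaluations of the Bernstein polynomial B_{0,n}(x) weighted by q^x.) -/
/-!
Write `E^n` umbrally for `E n`, i.e. let `φ` be the linear functional on polynomials with
`φ (X ^ n) = E n`. The recurrence for the `q`-Euler numbers says that
`q * φ (p(X + 1)) + φ p = 2 * p(0)` for every `p`, the equation that the weighted fermionic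
`p`-adic integral `p ↦ ∫ p(x) q ^ x dμ₋₁(x)` satisfies, and it determines `φ` as soon as `q + 1` is
regular. If `ψ` is the functional for `q⁻¹`, then `p ↦ ψ (p(-X))` and `p ↦ q * φ (p(X + 1))` solve
the same such equation, hence agree. Evaluating `ψ` at the Bernstein polynomial `(1 - X) ^ n` then
only takes one more application of each functional equation.
-/

section

open Polynomial

theorem linearMap_ext_X_pow {R M : Type*} [Semiring R] [AddCommMonoid M] [Module R M]
    {φ ψ : R[X] →ₗ[R] M} (h : ∀ n, φ (X ^ n) = ψ (X ^ n)) : φ = ψ :=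
  (basisMonomials R).ext fun n => by
    simpa only [coe_basisMonomials, X_pow_eq_monomial] using h n

section CommSemiring

variable {R : Type*} [CommSemiring R]

theorem map_taylor_X_pow {M : Type*} [AddCommMonoid M] [Module R M] (φ : R[X] →ₗ[R] M) (r : R)
    (n : ℕ) :
    φ (taylor r (X ^ n)) =
      ∑ l ∈ Finset.range (n + 1), (r ^ (n - l) * (n.choose l : R)) • φ (X ^ l) := by
  rw [taylor_X_pow, add_pow, map_sum]
  refine Finset.sum_congr rfl fun l _ => ?_
  have hterm : X ^ l * C r ^ (n - l) * (n.choose l : R[X]) =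
      (r ^ (n - l) * (n.choose l : R)) • X ^ l := by
    rw [smul_eq_C_mul, C_mul, C_pow, map_natCast]
    ring
  rw [hterm, map_smul]

/-- The umbral evaluation attached to a sequence `a`: the linear functional on polynomials which
lowers exponents to indices, `X ^ n ↦ a n`. -/
noncomputable def umbralEval (a : ℕ → R) : R[X] →ₗ[R] R :=
  (basisMonomials R).constr R a

@[simp]
theorem umbralEval_X_pow (a : ℕ → R) (n : ℕ) : umbralEval a (X ^ n) = a n := by
  simpa only [umbralEval, coe_basisMonomials, X_pow_eq_monomial] using
    (basisMonomials R).constr_basis R a n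

/-- The sequence `E` satisfies the defining recurrence of the `q`-Euler numbers. The initial value
is given as `(q + 1) * E 0 = 2`, which makes sense in a ring without division. -/
structure IsQEuler (q : R) (E : ℕ → R) : Prop where
  zero : (q + 1) * E 0 = 2
  recurrence : ∀ n, 1 ≤ n → q * ∑ l ∈ Finset.range (n + 1), (n.choose l : R) * E l + E n = 0

/-- A functional on polynomials satisfying the shift equation
`q * φ (p(X + 1)) + φ p = 2 * p(0)` of the fermionic `p`-adic integral weighted by `q ^ x`. -/
def IsEulerFunctional (q : R) (φ : R[X] →ₗ[R] R) : Prop :=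
  ∀ p : R[X], q * φ (taylor 1 p) + φ p = 2 * p.eval 0

theorem IsQEuler.isEulerFunctional_umbralEval {q : R} {E : ℕ → R} (hE : IsQEuler q E) :
    IsEulerFunctional q (umbralEval E) := by
  suffices h : q • umbralEval E ∘ₗ taylor 1 + umbralEval E = (2 : R) • leval 0 from
    LinearMap.congr_fun h
  refine linearMap_ext_X_pow fun n => ?_
  simp only [LinearMap.add_apply, LinearMap.smul_apply, LinearMap.comp_apply, map_taylor_X_pow,
    umbralEval_X_pow, leval_apply, eval_pow, eval_X, one_pow, one_mul, smul_eq_mul]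
  rcases Nat.eq_zero_or_pos n with rfl | hn
  · simpa [add_mul] using hE.zero
  · rw [hE.recurrence n hn, zero_pow hn.ne', mul_zero]

/-- The shift is unipotent for the degree filtration, so `q • taylor r + 1` acts on each graded
piece as `q + 1`. -/
theorem eq_of_smul_comp_taylor_add_eq {M : Type*} [AddCommGroup M] [Module R M] {q : R}
    (hq : IsSMulRegular M (q + 1)) (r : R) {φ ψ : R[X] →ₗ[R] M}
    (h : ∀ p, q • φ (taylor r p) + φ p = q • ψ (taylor r p) + ψ p) : φ = ψ := by
  refine linearMap_ext_X_pow fun n => ?_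
  induction n using Nat.strong_induction_on with
  | _ n ih =>
    have hlower : ∑ l ∈ Finset.range n, (r ^ (n - l) * (n.choose l : R)) • φ (X ^ l) =
        ∑ l ∈ Finset.range n, (r ^ (n - l) * (n.choose l : R)) • ψ (X ^ l) :=
      Finset.sum_congr rfl fun l hl => by rw [ih l (Finset.mem_range.mp hl)]
    have hn := h (X ^ n)
    simp only [map_taylor_X_pow, Finset.sum_range_succ, hlower, Nat.sub_self, pow_zero,
      Nat.choose_self, Nat.cast_one, mul_one, one_smul, smul_add, add_assoc,
      add_right_inj] at hn
    apply hq
    simpa only [add_smul, one_smul] using hn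

end CommSemiring

section CommRing

variable {R : Type*} [CommRing R]

theorem umbralEval_one_sub_X_pow (a : ℕ → R) (n : ℕ) :
    umbralEval a ((1 - X) ^ n) =
      ∑ j ∈ Finset.range (n + 1), (n.choose j : R) * (-1) ^ j * a j := by
  rw [sub_eq_neg_add, add_pow, map_sum]
  refine Finset.sum_congr rfl fun j _ => ?_
  have hterm : (-X) ^ j * 1 ^ (n - j) * (n.choose j : R[X]) =
      ((n.choose j : R) * (-1) ^ j) • X ^ j := by
    rw [smul_eq_C_mul, C_mul, C_pow, C_neg, C_1, map_natCast, neg_pow (X : R[X])]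
    ring
  rw [hterm, map_smul, umbralEval_X_pow, smul_eq_mul]

namespace IsEulerFunctional

variable {q : Rˣ} {φ ψ : R[X] →ₗ[R] R}

theorem apply_comp_neg_X_add_apply_comp_one_sub_X
    (hψ : IsEulerFunctional (↑q⁻¹ : R) ψ) (p : R[X]) :
    ψ (p.comp (-X)) + q * ψ (p.comp (1 - X)) = 2 * q * p.eval 1 := by
  have hshift : taylor 1 (p.comp (1 - X)) = p.comp (-X) := by
    simp [taylor_apply, comp_assoc]
  have h := hψ (p.comp (1 - X))
  rw [hshift, eval_comp, eval_sub, eval_one, eval_X, sub_zero] at h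
  linear_combination (q : R) * h - ψ (p.comp (-X)) * q.mul_inv

theorem apply_comp_neg_X (hq : IsLeftRegular (q + 1 : R)) (hφ : IsEulerFunctional (q : R) φ)
    (hψ : IsEulerFunctional (↑q⁻¹ : R) ψ) (p : R[X]) :
    ψ (p.comp (-X)) = q * φ (taylor 1 p) := by
  suffices h : ψ ∘ₗ (aeval (-X)).toLinearMap = (q : R) • φ ∘ₗ taylor 1 from
    LinearMap.congr_fun h p
  refine eq_of_smul_comp_taylor_add_eq (isLeftRegular_iff.mp hq) 1 fun p => ?_
  have hreflect : (taylor 1 p).comp (-X) = p.comp (1 - X) := by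
    simp [taylor_apply, comp_assoc, neg_add_eq_sub]
  have hφ' := hφ (taylor 1 p)
  rw [taylor_eval, zero_add] at hφ'
  calc q * ψ ((taylor 1 p).comp (-X)) + ψ (p.comp (-X))
      = 2 * q * p.eval 1 := by
        rw [hreflect, add_comm, hψ.apply_comp_neg_X_add_apply_comp_one_sub_X]
    _ = q * (q * φ (taylor 1 (taylor 1 p))) + q * φ (taylor 1 p) := by
        linear_combination -(q : R) * hφ'

theorem apply_comp_one_sub_X (hq : IsLeftRegular (q + 1 : R))
    (hφ : IsEulerFunctional (q : R) φ) (hψ : IsEulerFunctional (↑q⁻¹ : R) ψ) (p : R[X]) :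
    ψ (p.comp (1 - X)) = 2 * p.eval 1 + ↑q⁻¹ * (φ p - 2 * p.eval 0) := by
  refine q.isUnit.mul_left_cancel ?_
  linear_combination hψ.apply_comp_neg_X_add_apply_comp_one_sub_X p
    - apply_comp_neg_X hq hφ hψ p - hφ p - (φ p - 2 * p.eval 0) * q.mul_inv

end IsEulerFunctional

theorem qEuler_bernstein_k0_general {q : Rˣ} (hq : IsLeftRegular (q + 1 : R)) {E E' : ℕ → R}
    (hE : IsQEuler (q : R) E) (hE' : IsQEuler (↑q⁻¹ : R) E') {n : ℕ} (hn : 1 ≤ n) :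
    ∑ j ∈ Finset.range (n + 1), (n.choose j : R) * (-1) ^ j * E' j = 2 + ↑q⁻¹ * E n := by
  have hreflect := IsEulerFunctional.apply_comp_one_sub_X hq hE.isEulerFunctional_umbralEval
    hE'.isEulerFunctional_umbralEval (X ^ n)
  rw [← umbralEval_one_sub_X_pow, ← X_pow_comp, hreflect]
  simp [Nat.one_le_iff_ne_zero.mp hn]

end CommRing

end

theorem isQEuler_of_ne_neg_one {K : Type*} [Field K] {q : K} (hq : q ≠ -1) {E : ℕ → K}
    (hE0 : E 0 = 2 / (q + 1))
    (hE : ∀ n : ℕ, 1 ≤ n →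
      q * ∑ l ∈ Finset.range (n + 1), (n.choose l : K) * E l + E n = 0) : IsQEuler q E :=
  ⟨by rw [hE0, mul_div_cancel₀ _ (mt eq_neg_of_add_eq_zero_left hq)], hE⟩

/-- `∑_{j=0}^{n} C(n,j) · (-1)^j · E_{j,q⁻¹} = 2 + q⁻¹ · E_{n,q}` for `n ≥ 1`
(k = 0 case of Corollary 5). `E : ℕ → K` are the q-Euler numbers for `q`,
`E' : ℕ → K` those for `q⁻¹`. -/
theorem qEuler_bernstein_k0 {K : Type*} [Field K] [CharZero K]
    (q : K) (hq0 : q ≠ 0) (hq1 : q ≠ -1)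
    (E E' : ℕ → K)
    (hE0 : E 0 = 2 / (q + 1))
    (hE : ∀ n : ℕ, 1 ≤ n →
      q * ∑ l ∈ Finset.range (n + 1), (n.choose l : K) * E l + E n = 0)
    (hE'0 : E' 0 = 2 / (q⁻¹ + 1))
    (hE' : ∀ n : ℕ, 1 ≤ n →
      q⁻¹ * ∑ l ∈ Finset.range (n + 1), (n.choose l : K) * E' l + E' n = 0) :
    ∀ n : ℕ, 1 ≤ n →
      ∑ j ∈ Finset.range (n + 1), (n.choose j : K) * (-1 : K) ^ j * E' j
        = 2 + q⁻¹ * E n := by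
  have hq1' : q⁻¹ ≠ -1 := by rwa [Ne, inv_eq_iff_eq_inv, inv_neg_one]
  exact fun n hn => qEuler_bernstein_k0_general (q := Units.mk0 q hq0)
    (IsRegular.of_ne_zero (mt eq_neg_of_add_eq_zero_left hq1)).left
    (isQEuler_of_ne_neg_one hq1 hE0 hE) (isQEuler_of_ne_neg_one hq1' hE'0 hE') hn
end

section
/- For all integers m, n, k with k > 0 and m + n > 2k, one has ∑_{j=0}^{n+m-2k} C(n+m-2k, j) · (-1)^j · E_{j+2k, q^{-1}} = q^{-1} · ∑_{j=0}^{2k} C(2k, j) · (-1)^{j+2k} · E_{n+m-j, q}. (Corollary 7 of the paper, k > 0 case, obtained by comparing two p-adic integral evaluations of the product of Bernstein polynomials B_{k,n}(x)·B_{k,m}(x) weighted by q^{-x}.) -/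
/-!
Write `L` for the linear functional on polynomials with `L (X ^ n) = E_{n,q}`. The recurrence of the
`q`-Euler numbers says that `L` behaves like the fermionic `p`-adic integral
`p ↦ ∫ p(x) q ^ x dμ₋₁(x)`: it is determined by `q L(p(X + 1)) + L(p) = 2 p(0)`. The substitution
`x ↦ -1 - x` turns the functional for `q⁻¹` into `q` times a functional satisfying the equation for
`q`, so by uniqueness it exchanges the two. Shifting once on each side shows that `x ↦ 1 - x` does
the same up to the boundary values `p(0)` and `p(1)`. Both of these vanish for
`p = X ^ a (1 - X) ^ b` with `a, b > 0`, and expanding `p` and `p(1 - X)` in powers of `X` gives the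
identity.
-/

open Polynomial

section Umbral

variable {R : Type*} [CommRing R]

/-- The umbral functional of a sequence `E`, i.e. evaluation of polynomials under the umbral
convention that replaces `X ^ n` by `E n`. -/
noncomputable def umbral (E : ℕ → R) : R[X] →ₗ[R] R :=
  lsum fun n => LinearMap.mulRight R (E n)

theorem umbral_X_pow (E : ℕ → R) (n : ℕ) : umbral E (X ^ n) = E n := by
  simp [umbral, X_pow_eq_monomial, sum_monomial_index]

theorem umbral_one_sub_X_pow_mul_X_pow (E : ℕ → R) (a b : ℕ) :
    umbral E ((1 - X) ^ a * X ^ b) =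
      ∑ j ∈ Finset.range (a + 1), (a.choose j : R) * (-1) ^ j * E (j + b) := by
  have expand : ((1 - X) ^ a * X ^ b : R[X]) =
      ∑ j ∈ Finset.range (a + 1), ((a.choose j : R) * (-1) ^ j) • X ^ (j + b) := by
    rw [sub_eq_neg_add, add_pow, Finset.sum_mul]
    refine Finset.sum_congr rfl fun j _ => ?_
    simp only [smul_eq_C_mul, map_mul, map_pow, map_neg, map_one, map_natCast, neg_pow (X : R[X])]
    ring
  simp only [expand, map_sum, map_smul, umbral_X_pow, smul_eq_mul]

theorem umbral_X_pow_mul_one_sub_X_pow (E : ℕ → R) (a b : ℕ) :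
    umbral E (X ^ a * (1 - X) ^ b) =
      ∑ j ∈ Finset.range (b + 1), (b.choose j : R) * (-1) ^ (j + b) * E (a + b - j) := by
  rw [mul_comm, umbral_one_sub_X_pow_mul_X_pow, ← Finset.sum_flip]
  refine Finset.sum_congr rfl fun j hj => ?_
  have hjb : j ≤ b := Finset.mem_range_succ_iff.1 hj
  have sign : (-1 : R) ^ (j + b) = (-1) ^ (b - j) := by
    rw [show j + b = b - j + 2 * j by lia, pow_add, pow_mul, neg_one_sq, one_pow, mul_one]
  rw [Nat.choose_symm hjb, sign, ← Nat.sub_add_comm hjb, add_comm b]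

theorem map_taylor_one_X_pow (L : R[X] →ₗ[R] R) (n : ℕ) :
    L (taylor 1 (X ^ n)) = ∑ l ∈ Finset.range (n + 1), (n.choose l : R) * L (X ^ l) := by
  rw [taylor_apply, X_pow_comp, map_one, add_pow, map_sum]
  refine Finset.sum_congr rfl fun l _ => ?_
  rw [one_pow, mul_one, mul_comm, ← map_natCast C, ← smul_eq_C_mul, map_smul, smul_eq_mul]

theorem taylor_one_comp_neg_one_sub_X (p : R[X]) :
    (taylor 1 p).comp (-1 - X) = p.comp (-X) := by
  rw [taylor_apply, comp_assoc]
  congr 1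
  simp only [add_comp, X_comp, one_comp, map_one]
  ring

end Umbral

section QEuler

variable {R : Type*} [CommRing R] {q q' : R}

/-- `E` is a sequence of `q`-Euler numbers. The initial value `2 / (q + 1)` is written without
division, so that the notion makes sense over any commutative ring. -/
structure IsQEulerSeq (q : R) (E : ℕ → R) : Prop where
  zero : (q + 1) * E 0 = 2
  recurrence : ∀ n : ℕ, 1 ≤ n →
    q * ∑ l ∈ Finset.range (n + 1), (n.choose l : R) * E l + E n = 0

theorem IsQEulerSeq.of_zero_eq_div {K : Type*} [Field K] {q : K} (hq : q ≠ -1) {E : ℕ → K}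
    (hE0 : E 0 = 2 / (q + 1))
    (hE : ∀ n : ℕ, 1 ≤ n →
      q * ∑ l ∈ Finset.range (n + 1), (n.choose l : K) * E l + E n = 0) :
    IsQEulerSeq q E where
  zero := by rw [hE0, mul_div_cancel₀ _ (mt eq_neg_of_add_eq_zero_left hq)]
  recurrence := hE

/-- `L` satisfies the functional equation `q ∫ p(x + 1) + ∫ p(x) = 2 p(0)` of the fermionic `p`-adic
integral with weight `q ^ x`. The shift `p(X + 1)` is encoded as `taylor 1 p`. -/
def IsQEulerFunctional (q : R) (L : R[X] →ₗ[R] R) : Prop :=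
  ∀ p : R[X], q * L (taylor 1 p) + L p = 2 * p.eval 0

theorem IsQEulerSeq.isQEulerFunctional_umbral {E : ℕ → R} (hE : IsQEulerSeq q E) :
    IsQEulerFunctional q (umbral E) := by
  intro p
  induction p using Polynomial.induction_on' with
  | add p r hp hr =>
    simp only [map_add, eval_add]
    linear_combination hp + hr
  | monomial n c =>
    have on_X_pow : q * umbral E (taylor 1 (X ^ n)) + umbral E (X ^ n) = 2 * 0 ^ n := by
      simp only [map_taylor_one_X_pow, umbral_X_pow]
      rcases Nat.eq_zero_or_pos n with rfl | hn
      · simpa [add_mul] using hE.zero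
      · rw [hE.recurrence n hn, zero_pow hn.ne', mul_zero]
    rw [← C_mul_X_pow_eq_monomial, ← smul_eq_C_mul]
    simp only [map_smul, eval_smul, eval_pow, eval_X, smul_eq_mul]
    linear_combination c * on_X_pow

namespace IsQEulerFunctional

variable {L L' : R[X] →ₗ[R] R}

theorem unique (hq : IsLeftRegular (q + 1)) (hL : IsQEulerFunctional q L)
    (hL' : IsQEulerFunctional q L') : L = L' := by
  have on_X_pow (n : ℕ) : L (X ^ n) = L' (X ^ n) := by
    induction n using Nat.strong_induction_on with
    | _ n ih =>
      have lower : ∑ l ∈ Finset.range n, (n.choose l : R) * L (X ^ l) =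
          ∑ l ∈ Finset.range n, (n.choose l : R) * L' (X ^ l) :=
        Finset.sum_congr rfl fun l hl => by rw [ih l (Finset.mem_range.1 hl)]
      have h := (hL (X ^ n)).trans (hL' (X ^ n)).symm
      simp only [map_taylor_one_X_pow, Finset.sum_range_succ, lower, Nat.choose_self,
        Nat.cast_one, one_mul] at h
      exact hq (by linear_combination h)
  refine (basisMonomials R).ext fun n => ?_
  simpa only [coe_basisMonomials, X_pow_eq_monomial] using on_X_pow n

theorem reflect (hqq' : q * q' = 1) (hL' : IsQEulerFunctional q' L') :
    IsQEulerFunctional q (q' • L' ∘ₗ (aeval (-1 - X : R[X])).toLinearMap) := by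
  intro p
  have shift_neg : taylor 1 (p.comp (-X)) = p.comp (-1 - X) := by
    simp [taylor_apply, comp_assoc, sub_eq_add_neg, add_comm]
  have h := hL' (p.comp (-X))
  simp only [shift_neg, eval_comp, eval_neg, eval_X, neg_zero] at h
  simp only [LinearMap.smul_apply, LinearMap.comp_apply, AlgHom.toLinearMap_apply,
    ← comp_eq_aeval, smul_eq_mul, taylor_one_comp_neg_one_sub_X]
  linear_combination h + L' (p.comp (-X)) * hqq'

theorem map_taylor_one_eq (hqq' : q * q' = 1) (hq : IsLeftRegular (q + 1))
    (hL : IsQEulerFunctional q L) (hL' : IsQEulerFunctional q' L') (p : R[X]) :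
    L (taylor 1 p) = q' * L' (p.comp (-X)) := by
  rw [hL.unique hq (hL'.reflect hqq')]
  simp only [LinearMap.smul_apply, LinearMap.comp_apply, AlgHom.toLinearMap_apply,
    ← comp_eq_aeval, smul_eq_mul, taylor_one_comp_neg_one_sub_X]

theorem map_comp_one_sub_X (hqq' : q * q' = 1) (hq : IsLeftRegular (q + 1))
    (hL : IsQEulerFunctional q L) (hL' : IsQEulerFunctional q' L') (p : R[X]) :
    L' (p.comp (1 - X)) = q' * L p + 2 * (p.eval 1 - q' * p.eval 0) := by
  have shift_one_sub : taylor 1 (p.comp (1 - X)) = p.comp (-X) := by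
    simp [taylor_apply, comp_assoc]
  have h' := hL' (p.comp (1 - X))
  simp only [shift_one_sub, eval_comp, eval_sub, eval_one, eval_X, sub_zero] at h'
  linear_combination h' - q' * hL p + map_taylor_one_eq hqq' hq hL hL' p +
    L (taylor 1 p) * hqq'

end IsQEulerFunctional

theorem qEuler_bernstein_product_kpos_general (hqq' : q * q' = 1) (hq : IsLeftRegular (q + 1))
    {E E' : ℕ → R} (hE : IsQEulerSeq q E) (hE' : IsQEulerSeq q' E') {a b : ℕ} (ha : a ≠ 0)
    (hb : b ≠ 0) :
    ∑ j ∈ Finset.range (a + 1), (a.choose j : R) * (-1) ^ j * E' (j + b) =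
      q' * ∑ j ∈ Finset.range (b + 1), (b.choose j : R) * (-1) ^ (j + b) * E (a + b - j) := by
  have h := hE.isQEulerFunctional_umbral.map_comp_one_sub_X hqq' hq
    hE'.isQEulerFunctional_umbral (X ^ a * (1 - X) ^ b)
  have comp_eq : (X ^ a * (1 - X) ^ b : R[X]).comp (1 - X) = (1 - X) ^ a * X ^ b := by simp
  rw [comp_eq, umbral_one_sub_X_pow_mul_X_pow, umbral_X_pow_mul_one_sub_X_pow] at h
  simpa [ha, hb] using h

end QEuler

/-- Corollary 7 (k > 0 case): for `k > 0` and `m + n > 2k`,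
`∑_{j=0}^{n+m-2k} C(n+m-2k,j)·(-1)^j·E_{j+2k,q⁻¹}
  = q⁻¹·∑_{j=0}^{2k} C(2k,j)·(-1)^{j+2k}·E_{n+m-j,q}`.
`E : ℕ → K` are the q-Euler numbers for `q`, `E' : ℕ → K` those for `q⁻¹`. -/
theorem qEuler_bernstein_product_kpos {K : Type*} [Field K] [CharZero K]
    (q : K) (hq0 : q ≠ 0) (hq1 : q ≠ -1)
    (E E' : ℕ → K)
    (hE0 : E 0 = 2 / (q + 1))
    (hE : ∀ n : ℕ, 1 ≤ n →
      q * ∑ l ∈ Finset.range (n + 1), (n.choose l : K) * E l + E n = 0)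
    (hE'0 : E' 0 = 2 / (q⁻¹ + 1))
    (hE' : ∀ n : ℕ, 1 ≤ n →
      q⁻¹ * ∑ l ∈ Finset.range (n + 1), (n.choose l : K) * E' l + E' n = 0) :
    ∀ m n k : ℕ, 0 < k → 2 * k < m + n →
      ∑ j ∈ Finset.range (n + m - 2 * k + 1),
          ((n + m - 2 * k).choose j : K) * (-1 : K) ^ j * E' (j + 2 * k)
        = q⁻¹ * ∑ j ∈ Finset.range (2 * k + 1),
            ((2 * k).choose j : K) * (-1 : K) ^ (j + 2 * k) * E (n + m - j) := by
  intro m n k hk hmn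
  have hq : IsLeftRegular (q + 1) :=
    (IsRegular.of_ne_zero (mt eq_neg_of_add_eq_zero_left hq1)).left
  have hq' : q⁻¹ ≠ -1 := by rwa [Ne, inv_eq_iff_eq_inv, inv_neg_one]
  simpa only [Nat.sub_add_cancel (show 2 * k ≤ n + m by lia)] using
    qEuler_bernstein_product_kpos_general (mul_inv_cancel₀ hq0) hq (.of_zero_eq_div hq1 hE0 hE)
      (.of_zero_eq_div hq' hE'0 hE') (show n + m - 2 * k ≠ 0 by lia) (show 2 * k ≠ 0 by lia)
end
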